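/- arXiv:1602.05748 — 2 statements merged into one kernel-verified Lean document; each statement's English description precedes it below -/
import Mathlib

section
/- Let D be a strongly connected digraph of order n ≥ 3 and let z_0 be some vertex of D such that d(x) + d(y) ≥ 2n − 1 for any two nonadjacent vertices x, y ∈ V(D) ∖ {z_0}. Then D has a directed cycle that contains all the vertices of D except possibly z_0. -/
/-!
Basic definitions for finite digraphs (no loops, no multiple arcs), where the arc
relation is `A : V → V → Prop`.  Paths and cycles are given as lists of (distinct)
vertices.
-/

variable {V : Type*}

/-- A (directed) path, given by the list of its vertices. -/
def IsPathOn (A : V → V → Prop) (l : List V) : Prop :=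
  l ≠ [] ∧ l.Nodup ∧ l.Chain' A

/-- A (directed) cycle, given by the list of its vertices; its length (number of
arcs) equals the length of the list. -/
def IsCycleOn (A : V → V → Prop) (l : List V) : Prop :=
  2 ≤ l.length ∧ l.Nodup ∧ l.Chain' A ∧
    ∀ a ∈ l.getLast?, ∀ b ∈ l.head?, A a b

/-- A directed path from `a` to `b`. -/
def IsPathFromTo (A : V → V → Prop) (l : List V) (a b : V) : Prop :=
  IsPathOn A l ∧ l.head? = some a ∧ l.getLast? = some b

/-- Out-degree `d⁺(x)`. -/
noncomputable def outDeg (A : V → V → Prop) (x : V) : ℕ := {y | A x y}.ncard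

/-- In-degree `d⁻(x)`. -/
noncomputable def inDeg (A : V → V → Prop) (x : V) : ℕ := {y | A y x}.ncard

/-- Degree `d(x) = d⁺(x) + d⁻(x)`. -/
noncomputable def deg (A : V → V → Prop) (x : V) : ℕ := outDeg A x + inDeg A x

/-- Out-degree into a set, `d⁺(x, S)`. -/
noncomputable def outDegOn (A : V → V → Prop) (x : V) (S : Set V) : ℕ :=
  {y ∈ S | A x y}.ncard

/-- In-degree from a set, `d⁻(x, S)`. -/
noncomputable def inDegOn (A : V → V → Prop) (x : V) (S : Set V) : ℕ :=
  {y ∈ S | A y x}.ncard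

/-- Degree with respect to a set, `d(x, S) = d⁺(x, S) + d⁻(x, S)`. -/
noncomputable def degOn (A : V → V → Prop) (x : V) (S : Set V) : ℕ :=
  outDegOn A x S + inDegOn A x S

/-- Two distinct vertices are adjacent if there is an arc between them in some
direction. -/
def DAdj (A : V → V → Prop) (x y : V) : Prop := A x y ∨ A y x

/-- `D` is `S`-strongly connected: between any two distinct vertices of `S` there
are directed paths in both directions. -/
def SetStronglyConnected (A : V → V → Prop) (S : Set V) : Prop :=
  ∀ x ∈ S, ∀ y ∈ S, x ≠ y → ∃ l, IsPathFromTo A l x y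

/-- Strong connectivity. -/
def StronglyConnected (A : V → V → Prop) : Prop :=
  ∀ x y : V, x ≠ y → ∃ l, IsPathFromTo A l x y

/-- 2-strong connectivity: at least 3 vertices, and deleting any vertex leaves a
strongly connected digraph. -/
def TwoStronglyConnected [Fintype V] (A : V → V → Prop) : Prop :=
  3 ≤ Fintype.card V ∧
    ∀ w x y : V, x ≠ w → y ≠ w → x ≠ y → ∃ l, IsPathFromTo A l x y ∧ w ∉ l

/-- Condition `A₀` for a set `Y` of vertices. -/
def CondA0 [Fintype V] (A : V → V → Prop) (Y : Set V) : Prop :=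
  ∀ x ∈ Y, ∀ y ∈ Y, ∀ z ∈ Y,
    x ≠ y → x ≠ z → y ≠ z → ¬ DAdj A x y →
      (¬ A x z →
        deg A x + deg A y + outDeg A x + inDeg A z ≥ 3 * Fintype.card V - 2) ∧
      (¬ A z x →
        deg A x + deg A y + inDeg A x + outDeg A z ≥ 3 * Fintype.card V - 2)

/-- A `C`-bypass: a path of length at least two whose end-vertices lie on the
cycle `c` and whose internal vertices avoid `c`. -/
def IsBypass (A : V → V → Prop) (c p : List V) : Prop :=
  IsPathOn A p ∧ 3 ≤ p.length ∧
    (∀ a ∈ p.head?, a ∈ c) ∧ (∀ b ∈ p.getLast?, b ∈ c) ∧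
    ∀ v ∈ p.tail.dropLast, v ∉ c

/-- The vertex `y` can be inserted into the path `p`. -/
def CanInsert (A : V → V → Prop) (p : List V) (y : V) : Prop :=
  ∃ i, ∃ h : i + 1 < p.length, A (p[i]'(Nat.lt_of_succ_lt h)) y ∧ A y (p[i+1]'h)

/-- A `(C, x)`-path: a path from a vertex `u` of the cycle `c` to `x`, meeting `c`
only in `u`. -/
def IsCtoXPath (A : V → V → Prop) (c l : List V) (u x : V) : Prop :=
  IsPathFromTo A l u x ∧ u ∈ c ∧ ∀ v ∈ l, v ∈ c → v = u

/-- An `(x, C)`-path: a path from `x` to a vertex `v` of the cycle `c`, meeting `c`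
only in `v`. -/
def IsXtoCPath (A : V → V → Prop) (c l : List V) (x v : V) : Prop :=
  IsPathFromTo A l x v ∧ v ∈ c ∧ ∀ w ∈ l, w ∈ c → w = v

/-!
The argument is relative to a set `S` of at least two vertices, all of which are to be put on one
cycle; in the end `S` consists of the vertices other than `z₀`.

First, two vertices `x`, `y` linked by paths in both directions but lying on no common cycle are
nonadjacent with `d(x) + d(y) ≤ 2n - 2`. Indeed, at most one `z` is joined to `x` in both
directions and also adjacent to `y`, since two such vertices would close a cycle through `x` and
`y`; likewise with the roles of `x` and `y` exchanged. Every `z` that is not of these kinds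
contributes at most 2 to `d(x) + d(y)`, and `x` and `y` themselves contribute nothing. So any two
vertices of `S` lie on a common cycle.

Next, let `C` be a cycle with maximal trace on `S`, and suppose that it misses a vertex of `S`. A
common cycle of that vertex and a vertex of `S` on `C` contains a bypass of `C`. Take a bypass that
skips as short a segment `G` of `C` as possible, and then one as short as possible; let `y ∈ S` lie
on its detour `Q`. Replacing `G` by `Q` and then reinserting vertices of `G` as long as possible
gives a cycle that, by maximality of `C`, still misses some `u ∈ G ∩ S`. Now `u` cannot be inserted
into the enlarged segment `C - G` and `y` cannot be inserted into the original one, while minimality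
of the bypass excludes paths of length at most two between `y` and `u` avoiding the rest of
`C ∪ Q`, as well as shortcuts of the detour. Hence `d(y) + d(u) ≤ 2n - 2`, again contradicting the
degree condition.
-/

section ArcCount

variable {A : V → V → Prop} {x y z : V}

theorem DAdj.symm (h : DAdj A x y) : DAdj A y x := Or.symm h

open Classical in
/-- The number of arcs between `x` and `z`, counting both directions; summing it over `z` turns
degrees into sums that can be bounded vertex by vertex. -/
noncomputable def arcCount (A : V → V → Prop) (x z : V) : ℕ :=
  (if A x z then 1 else 0) + (if A z x then 1 else 0)

theorem deg_eq_sum_arcCount [Fintype V] (A : V → V → Prop) (x : V) :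
    deg A x = ∑ z, arcCount A x z := by
  classical
  simp [deg, outDeg, inDeg, arcCount, Finset.sum_add_distrib, Set.ncard_eq_toFinset_card']

theorem arcCount_le_two (A : V → V → Prop) (x z : V) : arcCount A x z ≤ 2 := by
  unfold arcCount; split_ifs <;> omega

theorem arcCount_le_one (h : ¬ A x z ∨ ¬ A z x) : arcCount A x z ≤ 1 := by
  unfold arcCount; split_ifs <;> simp_all

theorem arcCount_eq_zero (h : ¬ DAdj A x z) : arcCount A x z = 0 := by
  unfold DAdj at h; unfold arcCount; split_ifs <;> simp_all

theorem arcCount_self (hA : ∀ v, ¬ A v v) (x : V) : arcCount A x x = 0 :=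
  arcCount_eq_zero (by simp [DAdj, hA])

theorem arcCount_add_arcCount_le_two (hxy : ¬ (A x z ∧ A z y)) (hyx : ¬ (A y z ∧ A z x)) :
    arcCount A x z + arcCount A y z ≤ 2 := by
  unfold arcCount
  split_ifs <;> simp_all

open Classical in
theorem arcCount_add_arcCount_le_ite (A : V → V → Prop) (x y z : V) :
    arcCount A x z + arcCount A y z ≤ 2 + (if A x z ∧ A z x ∧ DAdj A y z then 1 else 0) +
      (if A y z ∧ A z y ∧ DAdj A x z then 1 else 0) := by
  unfold arcCount DAdj
  by_cases A x z <;> by_cases A z x <;> by_cases A y z <;> by_cases A z y <;> simp_all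

theorem deg_add_deg_add_two_le_of_subsingleton [Fintype V] (hA : ∀ v, ¬ A v v) (hne : x ≠ y)
    (hadj : ¬ DAdj A x y) (hx : {z | A x z ∧ A z x ∧ DAdj A y z}.Subsingleton)
    (hy : {z | A y z ∧ A z y ∧ DAdj A x z}.Subsingleton) :
    deg A x + deg A y + 2 ≤ 2 * Fintype.card V := by
  classical
  have sum_ite_le_one {p : V → Prop} [DecidablePred p] (hp : {z | p z}.Subsingleton) :
      ∑ z, (if p z then 1 else 0) ≤ 1 := by
    rw [← Finset.card_filter]
    exact Finset.card_le_one.mpr fun a ha b hb =>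
      hp (Finset.mem_filter.mp ha).2 (Finset.mem_filter.mp hb).2
  have vertexwise (z : V) : arcCount A x z + arcCount A y z +
      ((if z = x then 2 else 0) + (if z = y then 2 else 0)) ≤
      2 + (if A x z ∧ A z x ∧ DAdj A y z then 1 else 0) +
        (if A y z ∧ A z y ∧ DAdj A x z then 1 else 0) := by
    rcases eq_or_ne z x with rfl | hzx
    · rw [arcCount_self hA, arcCount_eq_zero fun h => hadj h.symm, if_pos rfl, if_neg hne]
      omega
    rcases eq_or_ne z y with rfl | hzy
    · rw [arcCount_self hA, arcCount_eq_zero hadj, if_neg hzx, if_pos rfl]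
      omega
    rw [if_neg hzx, if_neg hzy]
    exact arcCount_add_arcCount_le_ite A x y z
  have total := Finset.sum_le_sum fun z (_ : z ∈ Finset.univ) => vertexwise z
  simp only [Finset.sum_add_distrib, Finset.sum_ite_eq', Finset.mem_univ, if_true,
    Finset.sum_const, smul_eq_mul, Finset.card_univ, ← deg_eq_sum_arcCount] at total
  have := sum_ite_le_one hx
  have := sum_ite_le_one hy
  omega

end ArcCount

section Lists

variable {A : V → V → Prop} {l m k : List V} {u x y : V}

/-- Every arc from the last vertex of `l` to the first vertex of `m` is present; this holds
vacuously if `l` or `m` is empty. It is the condition under which the paths `l` and `m` can be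
joined. -/
def Link (A : V → V → Prop) (l m : List V) : Prop :=
  ∀ a ∈ l.getLast?, ∀ b ∈ m.head?, A a b

theorem link_singleton : Link A [x] [y] ↔ A x y := by
  simp [Link]

theorem link_append_left (hm : m ≠ []) : Link A (l ++ m) k ↔ Link A m k := by
  simp [Link, List.getLast?_append, List.getLast?_eq_some_getLast hm]

theorem link_append_right (hl : l ≠ []) : Link A k (l ++ m) ↔ Link A k l := by
  simp [Link, List.head?_append, List.head?_eq_some_head hl]

theorem link_flip_reverse : Link (flip A) l.reverse m.reverse ↔ Link A m l := by
  simp only [Link, List.getLast?_reverse, List.head?_reverse, flip]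
  exact ⟨fun h a ha b hb => h b hb a ha, fun h a ha b hb => h b hb a ha⟩

theorem isChain_append_iff_link :
    (l ++ m).IsChain A ↔ l.IsChain A ∧ m.IsChain A ∧ Link A l m :=
  List.isChain_append

theorem IsPathFromTo.flip_reverse (h : IsPathFromTo A l x y) :
    IsPathFromTo (flip A) l.reverse y x := by
  obtain ⟨⟨hne, hnd, hch⟩, hhead, hlast⟩ := h
  exact ⟨⟨List.reverse_ne_nil_iff.mpr hne, List.nodup_reverse.mpr hnd,
    List.isChain_reverse.mpr hch⟩, by rwa [List.head?_reverse], by rwa [List.getLast?_reverse]⟩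

theorem isCycleOn_iff_link :
    IsCycleOn A l ↔ 2 ≤ l.length ∧ l.Nodup ∧ l.IsChain A ∧ Link A l l :=
  Iff.rfl

theorem isCycleOn_append (hl : l ≠ []) (hm : m ≠ []) :
    IsCycleOn A (l ++ m) ↔
      (l ++ m).Nodup ∧ l.IsChain A ∧ m.IsChain A ∧ Link A l m ∧ Link A m l := by
  have hlen : 2 ≤ (l ++ m).length := by
    have := List.length_pos_iff.mpr hl
    have := List.length_pos_iff.mpr hm
    rw [List.length_append]; omega
  rw [isCycleOn_iff_link, link_append_left hm, link_append_right hl, isChain_append_iff_link]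
  tauto

theorem IsCycleOn.rotate (h : IsCycleOn A (l ++ m)) : IsCycleOn A (m ++ l) := by
  rcases eq_or_ne l [] with rfl | hl
  · simpa using h
  rcases eq_or_ne m [] with rfl | hm
  · simpa using h
  rw [isCycleOn_append hl hm] at h
  rw [isCycleOn_append hm hl, List.nodup_append_comm]
  tauto

theorem IsCycleOn.flip_reverse (h : IsCycleOn A l) : IsCycleOn (flip A) l.reverse :=
  ⟨by rw [List.length_reverse]; exact h.1, List.nodup_reverse.mpr h.2.1,
    List.isChain_reverse.mpr h.2.2.1, link_flip_reverse.mpr h.2.2.2⟩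

theorem canInsert_iff_exists_eq_append :
    CanInsert A l u ↔ ∃ s a b t, l = s ++ a :: b :: t ∧ A a u ∧ A u b := by
  refine ⟨fun ⟨i, hi, hau, hub⟩ => ⟨l.take i, l[i], l[i + 1], l.drop (i + 2), ?_, hau, hub⟩, ?_⟩
  · rw [List.getElem_cons_drop, List.getElem_cons_drop, List.take_append_drop]
  · rintro ⟨s, a, b, t, rfl, hau, hub⟩
    exact ⟨s.length, by simp, by simpa using hau, by simpa using hub⟩

theorem not_canInsert_iff_isChain :
    ¬ CanInsert A l u ↔ l.IsChain fun a b => ¬ (A a u ∧ A u b) := by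
  simp only [CanInsert, List.isChain_iff_getElem, not_exists]

theorem insert_perm_cons {s t : List V} {a b : V} :
    (s ++ a :: u :: b :: t).Perm (u :: (s ++ a :: b :: t)) := by
  simpa using List.perm_middle (l₁ := s ++ [a]) (a := u) (l₂ := b :: t)

theorem IsCycleOn.insert {s t : List V} {a b : V} (h : IsCycleOn A (s ++ a :: b :: t))
    (hau : A a u) (hub : A u b) (hu : u ∉ s ++ a :: b :: t) :
    IsCycleOn A (s ++ a :: u :: b :: t) := by
  have hsplit : s ++ a :: b :: t = (s ++ [a]) ++ (b :: t) := by simp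
  have hinsert : s ++ a :: u :: b :: t = (s ++ [a]) ++ (u :: b :: t) := by simp
  have hnd : (s ++ a :: u :: b :: t).Nodup :=
    insert_perm_cons.nodup_iff.mpr (List.nodup_cons.mpr ⟨hu, h.2.1⟩)
  rw [hsplit, isCycleOn_append (by simp) (by simp)] at h
  rw [hinsert] at hnd ⊢
  rw [isCycleOn_append (by simp) (by simp)]
  refine ⟨hnd, h.2.1, List.isChain_cons_cons.mpr ⟨hub, h.2.2.1⟩, ?_, ?_⟩
  · exact (link_append_left (by simp)).mpr (link_singleton.mpr hau)
  · exact (link_append_left (l := [u]) (by simp)).mpr h.2.2.2.2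

theorem exists_first_mem {C : Set V} (h : ∃ c ∈ l, c ∈ C) :
    ∃ s c t, l = s ++ c :: t ∧ c ∈ C ∧ ∀ v ∈ s, v ∉ C := by
  induction l with
  | nil => simp at h
  | cons x l ih =>
    by_cases hx : x ∈ C
    · exact ⟨[], x, l, rfl, hx, by simp⟩
    · obtain ⟨s, c, t, rfl, hc, hs⟩ := ih (by simpa [hx] using h)
      exact ⟨x :: s, c, t, rfl, hc, by simpa [hx] using hs⟩

theorem exists_last_mem {C : Set V} (h : ∃ c ∈ l, c ∈ C) :
    ∃ s c t, l = s ++ c :: t ∧ c ∈ C ∧ ∀ v ∈ t, v ∉ C := by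
  obtain ⟨s, c, t, hl, hc, hs⟩ := exists_first_mem (l := l.reverse) (C := C) (by simpa using h)
  refine ⟨t.reverse, c, s.reverse, ?_, hc, by simpa using hs⟩
  rw [← List.reverse_reverse l, hl]
  simp

theorem sum_map_arcCount_cons_le (h : ¬ CanInsert A (x :: l) u) [Decidable (A u x)] :
    ((x :: l).map (arcCount A u)).sum ≤ (x :: l).length + if A u x then 1 else 0 := by
  classical
  induction l generalizing x with
  | nil => simp only [List.map_cons, List.map_nil, List.sum_cons, List.sum_nil, arcCount,
      List.length_cons, List.length_nil]; split_ifs <;> omega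
  | cons y l ih =>
    rw [not_canInsert_iff_isChain, List.isChain_cons_cons, ← not_canInsert_iff_isChain] at h
    have head_le : arcCount A u x + (if A u y then 1 else 0) ≤ 1 + if A u x then 1 else 0 := by
      unfold arcCount
      split_ifs <;> simp_all
    have tail_le := ih h.2
    rw [List.map_cons, List.sum_cons, List.length_cons (as := y :: l)]
    omega

theorem sum_map_arcCount_le_length_add_one (h : ¬ CanInsert A l u) :
    (l.map (arcCount A u)).sum ≤ l.length + 1 := by
  classical
  cases l with
  | nil => simp
  | cons x l =>
    have := sum_map_arcCount_cons_le h
    split_ifs at this <;> omega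

theorem sum_map_arcCount_add_length_add_one_le (hA : ∀ v, ¬ A v v) (hnd : l.Nodup)
    (hsub : l ⊆ m) (hum : u ∈ m) (hul : u ∉ l) (hins : ¬ CanInsert A l u) :
    (m.map (arcCount A u)).sum + l.length + 1 ≤ 2 * m.length := by
  classical
  have hperm : ((u :: l) ++ m.diff (u :: l)).Perm m :=
    List.subperm_append_diff_self_of_count_le <| List.subperm_ext_iff.mp <|
      List.subperm_of_subset (List.nodup_cons.mpr ⟨hul, hnd⟩) (List.cons_subset.mpr ⟨hum, hsub⟩)
  have rest_le (k : List V) : (k.map (arcCount A u)).sum ≤ 2 * k.length := by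
    simpa [mul_comm] using
      List.sum_le_card_nsmul (k.map (arcCount A u)) 2 (by simp [arcCount_le_two])
  have hl := sum_map_arcCount_le_length_add_one hins
  have hrest := rest_le (m.diff (u :: l))
  rw [← (hperm.map _).sum_eq, ← hperm.length_eq, List.map_append, List.sum_append, List.map_cons,
    List.sum_cons, arcCount_self hA, List.length_append, List.length_cons]
  omega

theorem deg_add_deg_add_two_le_of_sum_map [Fintype V] (hnd : l.Nodup)
    (hout : ∀ z ∉ l, arcCount A x z + arcCount A y z ≤ 2)
    (hin : (l.map (arcCount A x)).sum + (l.map (arcCount A y)).sum + 2 ≤ 2 * l.length) :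
    deg A x + deg A y + 2 ≤ 2 * Fintype.card V := by
  classical
  have hcompl : ∑ z ∈ l.toFinsetᶜ, arcCount A x z + ∑ z ∈ l.toFinsetᶜ, arcCount A y z ≤
      2 * l.toFinsetᶜ.card := by
    rw [← Finset.sum_add_distrib, mul_comm, ← smul_eq_mul]
    exact Finset.sum_le_card_nsmul _ _ _ fun z hz => hout z (by simpa using hz)
  have deg_eq (v : V) :
      deg A v = (l.map (arcCount A v)).sum + ∑ z ∈ l.toFinsetᶜ, arcCount A v z := by
    rw [deg_eq_sum_arcCount, ← List.sum_toFinset _ hnd, Finset.sum_add_sum_compl]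
  have hcard := Finset.card_compl_add_card l.toFinset
  rw [List.toFinset_card_of_nodup hnd] at hcard
  rw [deg_eq, deg_eq]
  omega

end Lists

section CommonCycle

variable {A : V → V → Prop} {l p : List V} {x y z z' : V}

theorem IsPathFromTo.exists_isCycleOn_of_arc (hp : IsPathFromTo A p y x) (hyx : y ≠ x)
    (hxy : A x y) : ∃ l, IsCycleOn A l ∧ x ∈ l ∧ y ∈ l := by
  obtain ⟨⟨-, hnd, hch⟩, hhead, hlast⟩ := hp
  have hy : y ∈ p := List.mem_of_head? hhead
  have hx : x ∈ p := List.mem_of_getLast? hlast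
  have hlen : 2 ≤ p.length := by
    have := (List.subperm_of_subset (l₂ := p) (List.nodup_cons.mpr ⟨by simpa using hyx,
      List.nodup_singleton x⟩) (by simp [hx, hy])).length_le
    simpa using this
  exact ⟨p, ⟨hlen, hnd, hch, by simpa [hhead, hlast] using hxy⟩, hx, hy⟩

theorem exists_isCycleOn_of_out_arcs (hA : ∀ v, ¬ A v v) (hp : IsPathFromTo A p y x)
    (hyx : y ≠ x) (hzz' : z ≠ z') (hyz : A y z) (hzy : A z y) (hyz' : A y z') (hz'y : A z' y)
    (hxz : A x z) (hxz' : A x z') : ∃ l, IsCycleOn A l ∧ x ∈ l ∧ y ∈ l := by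
  have ne_of_arc {a b : V} (h : A a b) : a ≠ b := by rintro rfl; exact hA a h
  obtain ⟨⟨-, hnd, hch⟩, hhead, hlast⟩ := hp
  obtain ⟨R, t, E, rfl, ht, hE⟩ := exists_last_mem (l := p) (C := {y, z, z'})
    ⟨y, List.mem_of_head? hhead, by simp⟩
  have htx : t ≠ x := by
    rcases ht with rfl | rfl | rfl
    exacts [hyx, (ne_of_arc hxz).symm, (ne_of_arc hxz').symm]
  have hEne : E ≠ [] := by
    rintro rfl
    exact htx (by simpa using hlast)
  rw [List.append_cons, List.getLast?_append_of_ne_nil _ hEne] at hlast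
  have htE : (t :: E).IsChain A := (isChain_append_iff_link.mp hch).2.1
  have hEnd : E.Nodup := (List.nodup_cons.mp hnd.of_append_right).2
  -- A path through `y` that only uses `y`, `z`, `z'`, starts in `z` or `z'` and ends in `t` is
  -- closed to a cycle by `E`.
  have close (W : List V) (hW : (W ++ [t]).Nodup) (hWch : (W ++ [t]).IsChain A)
      (hWsub : ∀ w ∈ W ++ [t], w ∈ ({y, z, z'} : Set V)) (hy : y ∈ W ++ [t])
      (hstart : ∀ w ∈ (W ++ [t]).head?, A x w) : ∃ l, IsCycleOn A l ∧ x ∈ l ∧ y ∈ l := by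
    refine ⟨(W ++ [t]) ++ E, (isCycleOn_append (by simp) hEne).mpr ⟨?_, hWch, ?_, ?_, ?_⟩,
      List.mem_append_right _ (List.mem_of_getLast? hlast), List.mem_append_left _ hy⟩
    · exact hW.append hEnd fun v hv hvE => hE v hvE (hWsub v hv)
    · exact (isChain_append_iff_link (l := [t]).mp htE).2.1
    · exact (link_append_left (by simp)).mpr (isChain_append_iff_link (l := [t]).mp htE).2.2
    · simpa [Link, hlast] using hstart
  rcases ht with rfl | rfl | rfl
  · exact close [z] (by simp [ne_of_arc hzy]) (by simp [hzy]) (by simp) (by simp) (by simp [hxz])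
  · exact close [z', y] (by simp [ne_of_arc hz'y, ne_of_arc hyz, hzz'.symm]) (by simp [hz'y, hyz])
      (by simp) (by simp) (by simp [hxz'])
  · exact close [z, y] (by simp [ne_of_arc hzy, ne_of_arc hyz', hzz']) (by simp [hzy, hyz'])
      (by simp) (by simp) (by simp [hxz])

theorem exists_isCycleOn_of_dAdj (hA : ∀ v, ¬ A v v) {q : List V} (hp : IsPathFromTo A p y x)
    (hq : IsPathFromTo A q x y) (hyx : y ≠ x) (hzz' : z ≠ z') (hyz : A y z) (hzy : A z y)
    (hyz' : A y z') (hz'y : A z' y) (hxz : DAdj A x z) (hxz' : DAdj A x z') :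
    ∃ l, IsCycleOn A l ∧ x ∈ l ∧ y ∈ l := by
  have ne_of_arc {a b : V} (h : A a b) : a ≠ b := by rintro rfl; exact hA a h
  have four_cycle {w w' : V} (hww' : w ≠ w') (hxw : A x w) (hwy : A w y) (hyw' : A y w')
      (hw'x : A w' x) : ∃ l, IsCycleOn A l ∧ x ∈ l ∧ y ∈ l := by
    refine ⟨[x, w, y, w'], isCycleOn_iff_link.mpr ⟨by simp, ?_, by simp [hxw, hwy, hyw'],
      by simpa [Link] using hw'x⟩, by simp, by simp⟩
    simp [ne_of_arc hxw, hyx.symm, (ne_of_arc hw'x).symm, ne_of_arc hwy, hww', ne_of_arc hyw']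
  rcases hxz with hxz | hzx <;> rcases hxz' with hxz' | hz'x
  · exact exists_isCycleOn_of_out_arcs hA hp hyx hzz' hyz hzy hyz' hz'y hxz hxz'
  · exact four_cycle hzz' hxz hzy hyz' hz'x
  · exact four_cycle hzz'.symm hxz' hz'y hyz hzx
  · obtain ⟨l, hl, hxl, hyl⟩ := exists_isCycleOn_of_out_arcs (A := flip A) hA hq.flip_reverse hyx
      hzz' hzy hyz hz'y hyz' hzx hz'x
    exact ⟨l.reverse, hl.flip_reverse, List.mem_reverse.mpr hxl, List.mem_reverse.mpr hyl⟩

theorem deg_add_deg_add_two_le_of_forall_isCycleOn [Fintype V] (hA : ∀ v, ¬ A v v) {q : List V}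
    (hp : IsPathFromTo A p x y) (hq : IsPathFromTo A q y x) (hne : x ≠ y)
    (hcyc : ∀ l, IsCycleOn A l → x ∈ l → y ∉ l) :
    ¬ DAdj A x y ∧ deg A x + deg A y + 2 ≤ 2 * Fintype.card V := by
  have hadj : ¬ DAdj A x y := by
    rintro (h | h)
    · obtain ⟨l, hl, hx, hy⟩ := hq.exists_isCycleOn_of_arc hne.symm h
      exact hcyc l hl hx hy
    · obtain ⟨l, hl, hy, hx⟩ := hp.exists_isCycleOn_of_arc hne h
      exact hcyc l hl hx hy
  refine ⟨hadj, deg_add_deg_add_two_le_of_subsingleton hA hne hadj ?_ ?_⟩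
  · rintro z ⟨hxz, hzx, hyz⟩ z' ⟨hxz', hz'x, hyz'⟩
    by_contra hzz'
    obtain ⟨l, hl, hy, hx⟩ :=
      exists_isCycleOn_of_dAdj hA hp hq hne hzz' hxz hzx hxz' hz'x hyz hyz'
    exact hcyc l hl hx hy
  · rintro z ⟨hyz, hzy, hxz⟩ z' ⟨hyz', hz'y, hxz'⟩
    by_contra hzz'
    obtain ⟨l, hl, hx, hy⟩ :=
      exists_isCycleOn_of_dAdj hA hq hp hne.symm hzz' hyz hzy hyz' hz'y hxz hxz'
    exact hcyc l hl hx hy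

end CommonCycle

section Bypass

variable {A : V → V → Prop} {S : Set V} {l m P G Q Q₁ Q₂ : List V} {r u x y : V}

/-- A cycle whose set of vertices in `S` is maximal with respect to inclusion, the candidate for a
cycle through all of `S`. -/
def IsMaximalCycle (A : V → V → Prop) (S : Set V) (l : List V) : Prop :=
  MaximalFor (IsCycleOn A) (fun l => {v ∈ S | v ∈ l}) l

theorem finite_setOf_isCycleOn [Finite V] (A : V → V → Prop) : {l | IsCycleOn A l}.Finite := by
  have := Fintype.ofFinite V
  exact (List.finite_length_le V (Fintype.card V)).subset fun l hl => hl.2.1.length_le_card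

theorem IsCycleOn.exists_isMaximalCycle [Finite V] (S : Set V) (hl : IsCycleOn A l) :
    ∃ m, IsMaximalCycle A S m :=
  (finite_setOf_isCycleOn A).exists_maximalFor _ _ ⟨l, hl⟩

theorem IsMaximalCycle.mem_of_isCycleOn (hl : IsMaximalCycle A S l) (hm : IsCycleOn A m)
    (hlm : ∀ v ∈ l, v ∈ S → v ∈ m) (hx : x ∈ m) (hxS : x ∈ S) : x ∈ l :=
  (hl.2 hm (fun v hv => ⟨hv.1, hlm v hv.2 hv.1⟩) ⟨hxS, hx⟩).2

theorem IsMaximalCycle.rotate (h : IsMaximalCycle A S (l ++ m)) : IsMaximalCycle A S (m ++ l) := by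
  refine ⟨h.1.rotate, fun k hk hle => ?_⟩
  simp only [List.mem_append, or_comm (a := _ ∈ m)] at hle ⊢
  simpa only [List.mem_append] using h.2 hk (by simpa only [List.mem_append] using hle)

theorem IsMaximalCycle.flip_reverse (h : IsMaximalCycle A S l) :
    IsMaximalCycle (flip A) S l.reverse := by
  refine ⟨h.1.flip_reverse, fun k hk hle => ?_⟩
  simpa using h.2 hk.flip_reverse (by simpa using hle)

/-- A nonempty path `Q` avoiding `C` and meeting `S`, the part of a bypass of the cycle `C` that
lies off `C`. -/
structure IsDetour (A : V → V → Prop) (S : Set V) (C Q : List V) : Prop where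
  nodup : Q.Nodup
  isChain : Q.IsChain A
  disjoint : Q.Disjoint C
  exists_mem : ∃ s ∈ Q, s ∈ S

namespace IsDetour

variable {C : List V}

theorem ne_nil (h : IsDetour A S C Q) : Q ≠ [] := by
  rintro rfl
  simpa using h.exists_mem

theorem of_subset {C' : List V} (h : IsDetour A S C Q) (hC : C' ⊆ C) : IsDetour A S C' Q :=
  ⟨h.nodup, h.isChain, List.disjoint_of_subset_right hC h.disjoint, h.exists_mem⟩

theorem left_of_append (h : IsDetour A S C (Q ++ m)) (hxQ : x ∈ Q) (hxS : x ∈ S) :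
    IsDetour A S C Q :=
  ⟨h.nodup.of_append_left, h.isChain.left_of_append,
    List.disjoint_of_subset_left (List.subset_append_left Q m) h.disjoint, x, hxQ, hxS⟩

theorem flip_reverse (h : IsDetour A S C Q) : IsDetour (flip A) S C.reverse Q.reverse :=
  ⟨List.nodup_reverse.mpr h.nodup, List.isChain_reverse.mpr h.isChain,
    fun v hvQ hvC => h.disjoint (List.mem_reverse.mp hvQ) (List.mem_reverse.mp hvC),
    by simpa using h.exists_mem⟩

end IsDetour

/-- `P ++ G` is a maximal cycle and the detour `Q` leads from the last vertex of `P` to its first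
vertex, bridging the gap `G`. Unlike in `IsBypass`, these two vertices may coincide. -/
structure IsGapBypass (A : V → V → Prop) (S : Set V) (P G Q : List V) : Prop where
  isMaximalCycle : IsMaximalCycle A S (P ++ G)
  isDetour : IsDetour A S (P ++ G) Q
  ne_nil : P ≠ []
  leave : Link A P Q
  enter : Link A Q P

/-- A bypass whose gap is shortest possible and, for this position of the gap, so is the detour;
this excludes arcs between the gap and vertices of `S` on the detour, and shortcuts of the detour
from such vertices. -/
structure IsMinimalBypass (A : V → V → Prop) (S : Set V) (P G Q : List V) : Prop
    extends IsGapBypass A S P G Q where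
  gap_le : ∀ P' G' Q', IsGapBypass A S P' G' Q' → G.length ≤ G'.length
  detour_le : ∀ Q', IsGapBypass A S P G Q' → Q.length ≤ Q'.length

theorem IsMaximalCycle.exists_isGapBypass_of_link (hl : IsMaximalCycle A S l)
    (hQ : IsDetour A S l Q) (hx : x ∈ l) (hy : y ∈ l) (hleave : Link A [x] Q)
    (henter : Link A Q [y]) : ∃ P G, IsGapBypass A S P G Q := by
  obtain ⟨s, t, rfl⟩ := List.append_of_mem hy
  have hx' : x ∈ y :: t ++ s := List.perm_append_comm.mem_iff.mp hx
  obtain ⟨M, G, hM⟩ := List.append_of_mem hx'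
  have hPG : y :: t ++ s = (M ++ [x]) ++ G := by rw [hM, List.append_cons]
  have hhead : (M ++ [x]).head? = some y := by
    rw [← List.head?_append_of_ne_nil _ (l₂ := G) (by simp), ← hPG, List.cons_append,
      List.head?_cons]
  refine ⟨M ++ [x], G, hPG ▸ hl.rotate, hPG ▸ hQ.of_subset List.perm_append_comm.subset, by simp,
    (link_append_left (by simp)).mpr hleave, ?_⟩
  simpa [Link, hhead] using henter

theorem IsMaximalCycle.exists_isGapBypass (hl : IsMaximalCycle A S l) (hm : IsCycleOn A m)
    (hul : u ∈ l) (hum : u ∈ m) (hx : x ∈ m) (hxS : x ∈ S) (hxl : x ∉ l) :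
    ∃ P G Q, IsGapBypass A S P G Q := by
  obtain ⟨s, t, rfl⟩ := List.append_of_mem hx
  have hum' : u ∈ t ++ s := by
    have hux : u ≠ x := fun h => hxl (h ▸ hul)
    simpa [hux, or_comm] using hum
  obtain ⟨M, c, Q₁, hts, hc, hQ₁⟩ := exists_last_mem (C := {v | v ∈ l}) ⟨u, hum', hul⟩
  obtain ⟨Q₂, c', R, hMc, hc', hQ₂⟩ :=
    exists_first_mem (l := M ++ [c]) (C := {v | v ∈ l}) ⟨c, by simp, hc⟩
  obtain ⟨W, rfl⟩ : ∃ W, M = Q₂ ++ W := ⟨(c' :: R).dropLast, by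
    simpa [List.dropLast_append_of_ne_nil] using congrArg List.dropLast hMc⟩
  -- Started in `c`, the second cycle runs through `x` and first returns to `l` in `c'`.
  have hcycle : IsCycleOn A ([c] ++ ((Q₁ ++ x :: Q₂) ++ W)) := by
    have : IsCycleOn A ((x :: Q₂ ++ W) ++ (c :: Q₁)) := by simpa [← hts] using hm.rotate
    simpa using this.rotate
  obtain ⟨hnd, -, hch, hleave, hclose⟩ := (isCycleOn_append (by simp) (by simp)).mp hcycle
  have hreturn : ((Q₁ ++ x :: Q₂) ++ c' :: R).IsChain A := by
    have : (((Q₁ ++ x :: Q₂) ++ W) ++ [c]).IsChain A :=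
      isChain_append_iff_link.mpr ⟨hch, by simp, hclose⟩
    simpa [← hMc] using this
  have hdetour : IsDetour A S l (Q₁ ++ x :: Q₂) := by
    refine ⟨hnd.of_append_right.of_append_left, hch.left_of_append, fun v hv hvl => ?_,
      x, by simp, hxS⟩
    simp only [List.mem_append, List.mem_cons] at hv
    rcases hv with hv | rfl | hv
    exacts [hQ₁ v hv hvl, hxl hvl, hQ₂ v hv hvl]
  obtain ⟨P, G, h⟩ := hl.exists_isGapBypass_of_link hdetour hc hc'
    ((link_append_right (by simp)).mp hleave)
    ((link_append_right (by simp) (l := [c'])).mp (isChain_append_iff_link.mp hreturn).2.2)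
  exact ⟨P, G, _, h⟩

theorem IsGapBypass.flip_reverse (h : IsGapBypass A S P G Q) :
    IsGapBypass (flip A) S P.reverse G.reverse Q.reverse where
  isMaximalCycle := IsMaximalCycle.rotate (by simpa using h.isMaximalCycle.flip_reverse)
  isDetour := h.isDetour.flip_reverse.of_subset (by simp)
  ne_nil := List.reverse_ne_nil_iff.mpr h.ne_nil
  leave := link_flip_reverse.mpr h.enter
  enter := link_flip_reverse.mpr h.leave

theorem IsGapBypass.exists_isMinimalBypass (h : IsGapBypass A S P G Q) :
    ∃ P G Q, IsMinimalBypass A S P G Q := by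
  obtain ⟨⟨P, G⟩, ⟨Q, h⟩, hG⟩ := exists_minimalFor_of_wellFoundedLT
    (fun PG : List V × List V => ∃ Q, IsGapBypass A S PG.1 PG.2 Q) (fun PG => PG.2.length)
    ⟨(P, G), Q, h⟩
  obtain ⟨Q, h, hQ⟩ :=
    exists_minimalFor_of_wellFoundedLT (IsGapBypass A S P G) List.length ⟨Q, h⟩
  exact ⟨P, G, Q, h, fun P' G' Q' h' => (le_total _ _).elim id (@hG (P', G') ⟨Q', h'⟩),
    fun Q' h' => (le_total _ _).elim id (hQ h')⟩

namespace IsMinimalBypass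

theorem flip_reverse (h : IsMinimalBypass A S P G Q) :
    IsMinimalBypass (flip A) S P.reverse G.reverse Q.reverse where
  toIsGapBypass := h.toIsGapBypass.flip_reverse
  gap_le P' G' Q' h' := by simpa using h.gap_le _ _ _ h'.flip_reverse
  detour_le Q' h' := by
    simpa using h.detour_le Q'.reverse (by simpa [flip] using h'.flip_reverse)

theorem not_link_to_gap (h : IsMinimalBypass A S P G Q) (hm : IsDetour A S (P ++ G) m)
    (hleave : Link A P m) (hu : u ∈ G) : ¬ Link A m [u] := by
  intro henter
  obtain ⟨G₁, G₂, rfl⟩ := List.append_of_mem hu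
  have hrot : IsMaximalCycle A S ((u :: G₂ ++ P) ++ G₁) := by
    have : IsMaximalCycle A S ((P ++ G₁) ++ u :: G₂) := by simpa using h.isMaximalCycle
    simpa using this.rotate
  -- Returning to `u` instead of the first vertex of `P` leaves only `G₁` as the gap.
  have shorter : IsGapBypass A S (u :: G₂ ++ P) G₁ m :=
    ⟨hrot, hm.of_subset fun v => by simp only [List.mem_append, List.mem_cons]; tauto, by simp,
      (link_append_left h.ne_nil).mpr hleave, (link_append_right (l := [u]) (by simp)).mpr henter⟩
  have := h.gap_le _ _ _ shorter
  simp only [List.length_append, List.length_cons] at this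
  omega

theorem not_arc_to_gap (h : IsMinimalBypass A S P G (l ++ r :: m)) (hy : y ∈ l ++ [r])
    (hyS : y ∈ S) (hu : u ∈ G) : ¬ A r u := fun hru => by
  rw [List.append_cons] at h
  exact h.not_link_to_gap (h.isDetour.left_of_append hy hyS)
    ((link_append_right (by simp)).mp h.leave) hu
    ((link_append_left (by simp)).mpr (link_singleton.mpr hru))

theorem not_arc_from_gap (h : IsMinimalBypass A S P G (l ++ r :: m)) (hy : y ∈ r :: m)
    (hyS : y ∈ S) (hu : u ∈ G) : ¬ A u r := by
  have hflip := h.flip_reverse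
  rw [List.reverse_append, List.reverse_cons, List.append_assoc] at hflip
  exact hflip.not_arc_to_gap (by simpa [or_comm] using hy) hyS (List.mem_reverse.mpr hu)

theorem not_dAdj_of_mem_gap (h : IsMinimalBypass A S P G Q) (hy : y ∈ Q) (hyS : y ∈ S)
    (hu : u ∈ G) : ¬ DAdj A y u := by
  obtain ⟨l, m, rfl⟩ := List.append_of_mem hy
  rintro (hyu | huy)
  · exact h.not_arc_to_gap (by simp) hyS hu hyu
  · exact h.not_arc_from_gap (by simp) hyS hu huy

theorem arcCount_le_one_of_mem_gap (h : IsMinimalBypass A S P G Q) (hy : y ∈ Q) (hyS : y ∈ S)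
    (hu : u ∈ G) (hr : r ∈ Q) : arcCount A u r ≤ 1 := by
  obtain ⟨l, m, rfl⟩ := List.append_of_mem hr
  rcases List.mem_append.mp hy with hyl | hym
  · exact arcCount_le_one (.inr (h.not_arc_to_gap (List.mem_append_left _ hyl) hyS hu))
  · exact arcCount_le_one (.inl (h.not_arc_from_gap hym hyS hu))

theorem not_arc_arc_to_gap (h : IsMinimalBypass A S P G Q) (hy : y ∈ Q) (hyS : y ∈ S)
    (hu : u ∈ G) (hrC : r ∉ P ++ G) (hrQ : r ∉ Q) : ¬ (A y r ∧ A r u) := by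
  rintro ⟨hyr, hru⟩
  obtain ⟨l, m, rfl⟩ := List.append_of_mem hy
  rw [List.append_cons] at h hrQ
  have hdetour := h.isDetour.left_of_append (x := y) (by simp) hyS
  refine h.not_link_to_gap (m := (l ++ [y]) ++ [r]) ⟨?_, ?_, ?_, y, by simp, hyS⟩ ?_ hu ?_
  · refine hdetour.nodup.append (List.nodup_singleton r) (List.disjoint_singleton.mpr fun hr => ?_)
    exact hrQ (List.mem_append_left _ hr)
  · exact isChain_append_iff_link.mpr ⟨hdetour.isChain, by simp,
      (link_append_left (by simp)).mpr (link_singleton.mpr hyr)⟩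
  · exact List.disjoint_append_left.mpr ⟨hdetour.disjoint, List.singleton_disjoint.mpr hrC⟩
  · exact (link_append_right (by simp)).mpr ((link_append_right (by simp)).mp h.leave)
  · exact (link_append_left (by simp)).mpr (link_singleton.mpr hru)

theorem not_arc_arc_from_gap (h : IsMinimalBypass A S P G Q) (hy : y ∈ Q) (hyS : y ∈ S)
    (hu : u ∈ G) (hrC : r ∉ P ++ G) (hrQ : r ∉ Q) : ¬ (A u r ∧ A r y) := fun hury =>
  h.flip_reverse.not_arc_arc_to_gap (List.mem_reverse.mpr hy) hyS (List.mem_reverse.mpr hu)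
    (by simpa using hrC) (by simpa using hrQ) hury.symm

theorem not_link_shortcut (h : IsMinimalBypass A S P G (Q₁ ++ y :: (l ++ m))) (hyS : y ∈ S)
    (hl : l ≠ []) : ¬ Link A [y] (m ++ P) := by
  intro hlink
  rw [List.append_cons] at h
  obtain ⟨hinit, hrest, -⟩ := isChain_append_iff_link.mp h.isDetour.isChain
  have hsub : (Q₁ ++ [y] ++ m).Sublist (Q₁ ++ [y] ++ (l ++ m)) := by simp
  have hleave : Link A P (Q₁ ++ [y]) := (link_append_right (by simp)).mp h.leave
  have hjoin : Link A (Q₁ ++ [y]) m ∧ Link A (Q₁ ++ [y] ++ m) P := by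
    rcases eq_or_ne m [] with rfl | hm
    · rw [List.append_nil, link_append_left (k := P) (by simp)]
      exact ⟨by simp [Link], hlink⟩
    · have henter := h.enter
      rw [← List.append_assoc, link_append_left hm] at henter
      rw [link_append_left hm, link_append_left (by simp)]
      exact ⟨(link_append_right hm).mp hlink, henter⟩
  have shorter : IsGapBypass A S P G (Q₁ ++ [y] ++ m) := by
    refine ⟨h.isMaximalCycle, ⟨h.isDetour.nodup.sublist hsub, ?_, ?_, y, by simp, hyS⟩, h.ne_nil,
      (link_append_right (by simp)).mpr hleave, hjoin.2⟩
    · exact isChain_append_iff_link.mpr ⟨hinit, hrest.right_of_append, hjoin.1⟩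
    · exact List.disjoint_of_subset_left hsub.subset h.isDetour.disjoint
  have hle := h.detour_le _ shorter
  have := List.length_pos_iff.mpr hl
  simp only [List.length_append] at hle
  omega

theorem not_canInsert (h : IsMinimalBypass A S P G Q) (hy : y ∈ Q) (hyS : y ∈ S) :
    ¬ CanInsert A P y := by
  intro hins
  obtain ⟨s, a, b, t, rfl, hay, hyb⟩ := canInsert_iff_exists_eq_append.mp hins
  have hyC : y ∉ s ++ a :: b :: (t ++ G) := by simpa using h.isDetour.disjoint hy
  have hcycle : IsCycleOn A (s ++ a :: y :: b :: (t ++ G)) :=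
    IsCycleOn.insert (by simpa using h.isMaximalCycle.1) hay hyb hyC
  refine hyC ?_
  simpa using h.isMaximalCycle.mem_of_isCycleOn hcycle
    (fun v hv _ => insert_perm_cons.mem_iff.mpr (List.mem_cons_of_mem _ (by simpa using hv)))
    (by simp) hyS

theorem not_canInsert_append (h : IsMinimalBypass A S P G (Q₁ ++ y :: Q₂)) (hyS : y ∈ S) :
    ¬ CanInsert A (Q₂ ++ P) y := by
  intro hins
  have hP := h.not_canInsert (y := y) (by simp) hyS
  obtain ⟨s, a, b, t, hst, hay, hyb⟩ := canInsert_iff_exists_eq_append.mp hins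
  rcases List.append_eq_append_iff.mp hst with ⟨c, rfl, hc⟩ | ⟨c, rfl, hc⟩
  · exact hP (canInsert_iff_exists_eq_append.mpr ⟨c, a, b, t, hc, hay, hyb⟩)
  rcases c with _ | ⟨a', c⟩
  · exact hP (canInsert_iff_exists_eq_append.mpr ⟨[], a, b, t, hc.symm, hay, hyb⟩)
  obtain ⟨rfl, hbt⟩ : a = a' ∧ b :: t = c ++ P := by simpa using hc
  refine not_link_shortcut (l := s ++ [a]) (m := c) (by simpa using h) hyS (by simp) ?_
  rw [← hbt]
  exact (link_append_right (l := [b]) (by simp)).mpr (link_singleton.mpr hyb)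

theorem not_canInsert_append_append (h : IsMinimalBypass A S P G (Q₁ ++ y :: Q₂)) (hyS : y ∈ S) :
    ¬ CanInsert A (Q₂ ++ P ++ Q₁) y := by
  have hflip : ¬ CanInsert (flip A) (Q₁.reverse ++ P.reverse) y :=
    not_canInsert_append (Q₁ := Q₂.reverse) (by simpa using h.flip_reverse) hyS
  rw [not_canInsert_iff_isChain, ← List.reverse_append, List.isChain_reverse] at hflip
  have hforward := not_canInsert_iff_isChain.mp (h.not_canInsert_append hyS)
  refine not_canInsert_iff_isChain.mpr (hforward.append_overlap ?_ h.ne_nil)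
  simpa [flip, and_comm] using hflip

theorem sum_map_arcCount_add_one_le (h : IsMinimalBypass A S P G Q) (hy : y ∈ Q)
    (hyS : y ∈ S) (hu : u ∈ G) : (Q.map (arcCount A u)).sum + 1 ≤ Q.length := by
  have huy : arcCount A u y = 0 :=
    arcCount_eq_zero fun hadj => h.not_dAdj_of_mem_gap hy hyS hu hadj.symm
  have sublist_le (k : List V) (hk : k ⊆ Q) : (k.map (arcCount A u)).sum ≤ k.length := by
    simpa using List.sum_le_card_nsmul (k.map (arcCount A u)) 1 (by
      simpa using fun r hr => h.arcCount_le_one_of_mem_gap hy hyS hu (hk hr))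
  obtain ⟨l, m, rfl⟩ := List.append_of_mem hy
  have := sublist_le l (by simp)
  have := sublist_le m fun v hv => by simp [hv]
  simp only [List.map_append, List.map_cons, List.sum_append, List.sum_cons, huy,
    List.length_append, List.length_cons]
  omega

theorem sum_map_arcCount_le (hA : ∀ v, ¬ A v v) (h : IsMinimalBypass A S P G Q) (hy : y ∈ Q)
    (hyS : y ∈ S) : ((P ++ G ++ Q).map (arcCount A y)).sum ≤ P.length + Q.length := by
  have hgap : (G.map (arcCount A y)).sum = 0 := by
    exact List.sum_eq_zero_iff.mpr (by
      simpa using fun u hu => arcCount_eq_zero (h.not_dAdj_of_mem_gap hy hyS hu))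
  obtain ⟨Q₁, Q₂, rfl⟩ := List.append_of_mem hy
  have := sum_map_arcCount_le_length_add_one (h.not_canInsert_append_append hyS)
  simp only [List.map_append, List.map_cons, List.sum_append, List.sum_cons, hgap,
    arcCount_self hA, List.length_append, List.length_cons] at this ⊢
  omega

theorem deg_add_deg_add_two_le [Fintype V] (hA : ∀ v, ¬ A v v) (h : IsMinimalBypass A S P G Q)
    (hy : y ∈ Q) (hyS : y ∈ S) (hu : u ∈ G)
    (hsum : ((P ++ G).map (arcCount A u)).sum + P.length + 1 ≤ 2 * (P ++ G).length) :
    deg A y + deg A u + 2 ≤ 2 * Fintype.card V := by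
  have hnd : (P ++ G ++ Q).Nodup :=
    h.isMaximalCycle.1.2.1.append h.isDetour.nodup h.isDetour.disjoint.symm
  refine deg_add_deg_add_two_le_of_sum_map hnd (fun r hr => ?_) ?_
  · rw [List.mem_append, not_or] at hr
    exact arcCount_add_arcCount_le_two (h.not_arc_arc_to_gap hy hyS hu hr.1 hr.2)
      (h.not_arc_arc_from_gap hy hyS hu hr.1 hr.2)
  · have := h.sum_map_arcCount_le hA hy hyS
    have := h.sum_map_arcCount_add_one_le hy hyS hu
    rw [List.map_append (l₁ := P ++ G) (f := arcCount A u), List.sum_append]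
    simp only [List.length_append] at *
    omega

end IsMinimalBypass

theorem IsCycleOn.exists_forall_not_canInsert [Finite V] {C : List V} (h : IsCycleOn A (P ++ Q))
    (hP : P ⊆ C) (hQ : Q.Disjoint C) :
    ∃ P', P ⊆ P' ∧ P' ⊆ C ∧ IsCycleOn A (P' ++ Q) ∧ ∀ u ∈ C, u ∉ P' → ¬ CanInsert A P' u := by
  have hfin : {P' | P ⊆ P' ∧ P' ⊆ C ∧ IsCycleOn A (P' ++ Q)}.Finite :=
    ((finite_setOf_isCycleOn A).preimage (List.append_left_injective Q).injOn).subset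
      fun P' h => h.2.2
  obtain ⟨P', ⟨hPP', hP'C, hcycle⟩, hmax⟩ :=
    hfin.exists_maximalFor List.length _ ⟨P, List.Subset.refl P, hP, h⟩
  refine ⟨P', hPP', hP'C, hcycle, fun u huC huP' hins => ?_⟩
  obtain ⟨s, a, b, t, rfl, hau, hub⟩ := canInsert_iff_exists_eq_append.mp hins
  have huQ : u ∉ Q := fun hu => hQ hu huC
  have hlonger : IsCycleOn A (s ++ a :: u :: b :: (t ++ Q)) :=
    IsCycleOn.insert (by simpa using hcycle) hau hub (by simpa [huQ] using huP')
  have hmem {v : V} : v ∈ s ++ a :: u :: b :: t ↔ v ∈ u :: (s ++ a :: b :: t) :=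
    insert_perm_cons.mem_iff
  have := @hmax (s ++ a :: u :: b :: t)
    ⟨fun v hv => hmem.mpr (List.mem_cons_of_mem _ (hPP' hv)), fun v hv => by
      rcases List.mem_cons.mp (hmem.mp hv) with rfl | hv
      exacts [huC, hP'C hv], by simpa using hlonger⟩
  simp at this

theorem IsGapBypass.exists_mem_gap_sum_map_arcCount_le [Finite V] (hA : ∀ v, ¬ A v v)
    (h : IsGapBypass A S P G Q) :
    ∃ u ∈ G, u ∈ S ∧
      ((P ++ G).map (arcCount A u)).sum + P.length + 1 ≤ 2 * (P ++ G).length := by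
  have hnd : (P ++ G).Nodup := h.isMaximalCycle.1.2.1
  have hP : P ⊆ P ++ G := List.subset_append_left P G
  have hcycle : IsCycleOn A (P ++ Q) := by
    refine (isCycleOn_append h.ne_nil h.isDetour.ne_nil).mpr ⟨?_, ?_, h.isDetour.isChain,
      h.leave, h.enter⟩
    · exact hnd.of_append_left.append h.isDetour.nodup
        (List.disjoint_of_subset_left hP h.isDetour.disjoint.symm)
    · exact (isChain_append_iff_link.mp h.isMaximalCycle.1.2.2.1).1
  obtain ⟨P', hPP', hP'C, hcycle', hins⟩ :=
    hcycle.exists_forall_not_canInsert hP h.isDetour.disjoint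
  obtain ⟨u, huC, huS, huP'⟩ : ∃ u ∈ P ++ G, u ∈ S ∧ u ∉ P' := by
    by_contra! hall
    obtain ⟨s, hsQ, hsS⟩ := h.isDetour.exists_mem
    exact h.isDetour.disjoint hsQ <| h.isMaximalCycle.mem_of_isCycleOn hcycle'
      (fun v hv hvS => List.mem_append_left _ (hall v hv hvS)) (List.mem_append_right _ hsQ) hsS
  have huG : u ∈ G := (List.mem_append.mp huC).resolve_left fun huP => huP' (hPP' huP)
  have hcount := sum_map_arcCount_add_length_add_one_le hA hcycle'.2.1.of_append_left hP'C huC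
    huP' (hins u huC huP')
  have hlen : P.length ≤ P'.length :=
    (List.subperm_of_subset hnd.of_append_left hPP').length_le
  exact ⟨u, huG, huS, by omega⟩

theorem IsGapBypass.exists_deg_add_deg_add_two_le [Fintype V] (hA : ∀ v, ¬ A v v)
    (h : IsGapBypass A S P G Q) : ∃ x ∈ S, ∃ y ∈ S, x ≠ y ∧ ¬ DAdj A x y ∧
      deg A x + deg A y + 2 ≤ 2 * Fintype.card V := by
  obtain ⟨P, G, Q, h⟩ := h.exists_isMinimalBypass
  obtain ⟨y, hy, hyS⟩ := h.isDetour.exists_mem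
  obtain ⟨u, hu, huS, hsum⟩ := h.exists_mem_gap_sum_map_arcCount_le hA
  have hyu : y ≠ u := fun hyu => h.isDetour.disjoint hy (List.mem_append_right _ (hyu ▸ hu))
  exact ⟨y, hyS, u, huS, hyu, h.not_dAdj_of_mem_gap hy hyS hu,
    h.deg_add_deg_add_two_le hA hy hyS hu hsum⟩

theorem exists_isCycleOn_of_forall_not_isGapBypass [Finite V] (hS : S.Nontrivial)
    (hpair : ∀ x ∈ S, ∀ y ∈ S, x ≠ y → ∃ l, IsCycleOn A l ∧ x ∈ l ∧ y ∈ l)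
    (hbypass : ∀ P G Q, ¬ IsGapBypass A S P G Q) : ∃ l, IsCycleOn A l ∧ ∀ v ∈ S, v ∈ l := by
  obtain ⟨x, hx, y, hy, hxy⟩ := hS
  obtain ⟨m, hm, hxm, -⟩ := hpair x hx y hy hxy
  obtain ⟨l, hl⟩ := hm.exists_isMaximalCycle S
  refine ⟨l, hl.1, fun s hs => by_contra fun hsl => ?_⟩
  obtain ⟨u, hul, huS⟩ : ∃ u ∈ l, u ∈ S := by
    by_contra! hempty
    exact hempty x (hl.mem_of_isCycleOn hm (fun v hv hvS => (hempty v hv hvS).elim) hxm hx) hx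
  obtain ⟨m, hm, hum, hsm⟩ := hpair u huS s hs fun hus => hsl (hus ▸ hul)
  obtain ⟨P, G, Q, h⟩ := hl.exists_isGapBypass hm hul hum hsm hs hsl
  exact hbypass P G Q h

end Bypass

theorem cycle_through_all_but_z0_general [Fintype V] (A : V → V → Prop) (hloops : ∀ v, ¬ A v v)
    (S : Set V) (hS : S.Nontrivial) (hconn : SetStronglyConnected A S)
    (hdeg : ∀ x ∈ S, ∀ y ∈ S, x ≠ y → ¬ DAdj A x y →
      deg A x + deg A y ≥ 2 * Fintype.card V - 1) :
    ∃ l : List V, IsCycleOn A l ∧ ∀ v ∈ S, v ∈ l := by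
  have hdeg_lt : ∀ x ∈ S, ∀ y ∈ S, x ≠ y → ¬ DAdj A x y →
      ¬ deg A x + deg A y + 2 ≤ 2 * Fintype.card V := fun x hx y hy hxy hadj => by
    have := hdeg x hx y hy hxy hadj
    omega
  refine exists_isCycleOn_of_forall_not_isGapBypass hS (fun x hx y hy hxy => ?_) fun P G Q h => ?_
  · by_contra! hcyc
    obtain ⟨p, hp⟩ := hconn x hx y hy hxy
    obtain ⟨q, hq⟩ := hconn y hy x hx hxy.symm
    obtain ⟨hadj, hle⟩ := deg_add_deg_add_two_le_of_forall_isCycleOn hloops hp hq hxy hcyc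
    exact hdeg_lt x hx y hy hxy hadj hle
  · obtain ⟨x, hx, y, hy, hxy, hadj, hle⟩ := h.exists_deg_add_deg_add_two_le hloops
    exact hdeg_lt x hx y hy hxy hadj hle

/-- Corollary 2. -/
theorem cycle_through_all_but_z0 [Fintype V] (A : V → V → Prop)
    (hloops : ∀ v, ¬ A v v)
    (hn : 3 ≤ Fintype.card V) (hconn : StronglyConnected A)
    (z₀ : V)
    (hdeg : ∀ x y : V, x ≠ z₀ → y ≠ z₀ → x ≠ y → ¬ DAdj A x y →
      deg A x + deg A y ≥ 2 * Fintype.card V - 1) :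
    ∃ l : List V, IsCycleOn A l ∧ ∀ v : V, v ≠ z₀ → v ∈ l := by
  have hS : ({z₀}ᶜ : Set V).Nontrivial := by
    rw [← Set.one_lt_ncard_iff_nontrivial, Set.ncard_compl, Set.ncard_singleton,
      Nat.card_eq_fintype_card]
    omega
  exact cycle_through_all_but_z0_general A hloops {z₀}ᶜ hS (fun x _ y _ => hconn x y)
    fun x hx y hy => hdeg x y hx hy
end

section
/- Let G be a 2-connected undirected graph of order n and let S be a subset of the vertices of G. If d(x) + d(y) ≥ n for any two nonadjacent vertices x ∈ S and y ∈ S, then S is cyclable in G; that is, G contains a cycle through all the vertices of S. -/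
/-!
Basic definitions for finite digraphs (no loops, no multiple arcs), where the arc
relation is `A : V → V → Prop`.  Paths and cycles are given as lists of (distinct)
vertices.
-/

variable {V : Type*}

/-!
Bondy–Chvátal closure, relative to `S`. Let `x`, `y` be nonadjacent with `d(x) + d(y) ≥ n`. If a
cycle of `G + xy` through `S` uses the edge `xy`, removing it leaves a path of `G` from `x` to `y`,
and Ore's crossing argument closes this path up to a cycle of `G` without losing any of its
vertices. So edges may be added inside `S` until `S` is a clique. A clique on at least three
vertices is cyclable in any graph. A clique on at most two vertices is contained in an edge, and in
a 2-edge-connected graph, in particular in a 2-connected one, every edge lies on a cycle.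
-/

open SimpleGraph

/-- `S` is cyclable in `G`: some cycle of `G` passes through all the vertices of `S`. The
cycle is a closed walk, as in the conclusion of Shi's theorem. -/
def IsCyclable (G : SimpleGraph V) (S : Set V) : Prop :=
  ∃ (v : V) (c : G.Walk v v), c.IsCycle ∧ ∀ s ∈ S, s ∈ c.support

section Cyclable

variable {G : SimpleGraph V} {S T : Set V} {x y : V}

lemma IsCyclable.anti (h : IsCyclable G T) (hST : S ⊆ T) : IsCyclable G S := by
  obtain ⟨v, c, hc, hT⟩ := h
  exact ⟨v, c, hc, fun s hs ↦ hT s (hST hs)⟩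

lemma isCyclable_support_of_adj {p : G.Walk x y} (hp : p.IsPath) (hl : 2 ≤ p.length)
    (h : G.Adj y x) : IsCyclable G {v | v ∈ p.support} := by
  refine ⟨y, .cons h p, (p.cons_isCycle_iff h).2 ⟨hp, fun he ↦ ?_⟩, fun s hs ↦ ?_⟩
  · have := hp.length_eq_one_of_mem_edges (Sym2.eq_swap ▸ he)
    omega
  · simpa using Or.inr hs

lemma isCyclable_support_of_adj_getVert {p : G.Walk x y} (hp : p.IsPath) (hl : 2 ≤ p.length)
    {i : ℕ} (hi : i < p.length) (hx : G.Adj x (p.getVert (i + 1))) (hy : G.Adj y (p.getVert i)) :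
    IsCyclable G {v | v ∈ p.support} := by
  let q : G.Walk x (p.getVert (i + 1)) :=
    (p.take i).append (.cons hy.symm (p.drop (i + 1)).reverse)
  have hq_support : q.support = p.support.take (i + 1) ++ (p.support.drop (i + 1)).reverse := by
    simp only [q, Walk.support_append, Walk.support_take, Walk.support_cons, List.tail_cons,
      Walk.support_reverse, Walk.drop_support_eq_support_drop_min, Nat.min_eq_left hi]
  have hqp : q.support.Perm p.support := by
    rw [hq_support]
    exact ((List.reverse_perm _).append_left _).trans (.of_eq (List.take_append_drop _ _))
  have hq : q.IsPath := .mk' (hqp.nodup_iff.2 hp.support_nodup)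
  have hql : q.length = p.length := by simpa using hqp.length_eq
  exact (isCyclable_support_of_adj hq (hql ▸ hl) hx.symm).anti fun v hv ↦ hqp.mem_iff.2 hv

lemma isCyclable_support_of_adj_of_adj_of_notMem {p : G.Walk x y} (hp : p.IsPath)
    (hl : 1 ≤ p.length) {v : V} (hv : v ∉ p.support) (hx : G.Adj x v) (hy : G.Adj y v) :
    IsCyclable G {w | w ∈ p.support} := by
  have hq : (Walk.cons hx.symm p).IsPath := (Walk.cons_isPath_iff _ _).2 ⟨hp, hv⟩
  exact (isCyclable_support_of_adj hq (Nat.succ_le_succ hl) hy).anti fun w hw ↦ by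
    simpa using Or.inr hw

lemma exists_adj_adj_perm_of_card_le_degree_add_degree [Fintype V] [DecidableRel G.Adj]
    (hdeg : Fintype.card V ≤ G.degree x + G.degree y) {σ : Equiv.Perm V} (hσ : σ y = x) :
    ∃ v, G.Adj x (σ v) ∧ G.Adj y v := by
  classical
  -- Neither `σ⁻¹(N(x))` nor `N(y)` contains `y`, so they are too large to be disjoint.
  have hx : (G.neighborFinset x).map σ.symm.toEmbedding ⊆ Finset.univ.erase y := by
    intro v hv
    have hxv : G.Adj x (σ v) := by simpa [Finset.mem_map_equiv] using hv
    exact Finset.mem_erase.2 ⟨fun h ↦ hxv.ne (by rw [h, hσ]), Finset.mem_univ v⟩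
  have hy : G.neighborFinset y ⊆ Finset.univ.erase y := by
    intro v hv
    exact Finset.mem_erase.2 ⟨((G.mem_neighborFinset y v).1 hv).ne', Finset.mem_univ v⟩
  have hcard : (Finset.univ.erase y).card <
      ((G.neighborFinset x).map σ.symm.toEmbedding).card + (G.neighborFinset y).card := by
    rw [Finset.card_map, card_neighborFinset_eq_degree, card_neighborFinset_eq_degree]
    exact (Finset.card_erase_lt_of_mem (Finset.mem_univ y)).trans_le hdeg
  obtain ⟨v, hv⟩ := Finset.inter_nonempty_of_card_lt_card_add_card hx hy hcard
  exact ⟨v, by simpa [Finset.mem_map_equiv] using hv⟩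

lemma formPerm_support_getVert [DecidableEq V] {p : G.Walk x y} (hp : p.IsPath) {i : ℕ}
    (hi : i < p.length) : p.support.formPerm (p.getVert i) = p.getVert (i + 1) := by
  have h := List.formPerm_apply_lt_getElem p.support hp.support_nodup i (by simpa using hi)
  simpa only [Walk.support_getElem_eq_getVert] using h

lemma formPerm_support_end [DecidableEq V] (p : G.Walk x y) : p.support.formPerm y = x := by
  cases p with
  | nil => simp
  | cons h p => simpa using List.formPerm_apply_getLast x p.support

lemma isCyclable_support_of_card_le_degree_add_degree [Fintype V] [DecidableRel G.Adj]
    {p : G.Walk x y} (hp : p.IsPath) (hl : 2 ≤ p.length)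
    (hdeg : Fintype.card V ≤ G.degree x + G.degree y) : IsCyclable G {v | v ∈ p.support} := by
  classical
  -- The successor permutation of `p` fixes the vertices off `p`, so the vertex it yields is either
  -- the site of a crossing on `p` or a common neighbour of `x` and `y` off `p`.
  obtain ⟨v, hxv, hyv⟩ := exists_adj_adj_perm_of_card_le_degree_add_degree hdeg
    (formPerm_support_end p)
  by_cases hv : v ∈ p.support
  · obtain ⟨i, rfl, hi⟩ := Walk.mem_support_iff_exists_getVert.1 hv
    have hi : i < p.length := hi.lt_of_ne fun h ↦ hyv.ne (by rw [h, Walk.getVert_length])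
    rw [formPerm_support_getVert hp hi] at hxv
    exact isCyclable_support_of_adj_getVert hp hl hi hxv hyv
  · rw [List.formPerm_apply_of_notMem hv] at hxv
    exact isCyclable_support_of_adj_of_adj_of_notMem hp (by omega) hv hxv hyv

lemma exists_isPath_of_isCycle_of_mem_edges {v : V} {c : G.Walk v v} (hc : c.IsCycle)
    (he : s(x, y) ∈ c.edges) :
    ∃ p : G.Walk x y, p.IsPath ∧ 2 ≤ p.length ∧ s(x, y) ∉ p.edges ∧
      ∀ w ∈ c.support, w ∈ p.support := by
  classical
  obtain ⟨d, hd, hsnd, hcd⟩ : ∃ d : G.Walk x x, d.IsCycle ∧ d.snd = y ∧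
      ∀ w ∈ c.support, w ∈ d.support := by
    have hx := c.fst_mem_support_of_mem_edges he
    have hr := hc.rotate hx
    have hy : y ∈ (c.rotate x hx).toSubgraph.neighborSet x :=
      Walk.adj_toSubgraph_iff_mem_edges.2 ((c.rotate_edges x hx).mem_iff.2 he)
    rw [hr.neighborSet_toSubgraph_endpoint] at hy
    rcases hy with rfl | rfl
    · exact ⟨_, hr, rfl, by simp⟩
    · exact ⟨_, hr.reverse, Walk.snd_reverse _, by simp⟩
  cases d with
  | nil => simp at hd
  | cons h p =>
    obtain rfl : _ = y := by simpa using hsnd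
    obtain ⟨hp, hep⟩ := (Walk.cons_isCycle_iff p h).1 hd
    have hl : 2 ≤ p.length := by simpa using hd.three_le_length
    refine ⟨p.reverse, hp.reverse, by simpa using hl, by simpa using hep, fun w hw ↦ ?_⟩
    obtain rfl | hw : w = x ∨ w ∈ p.support := by simpa using hcd w hw
    · simp
    · simpa using hw

lemma mem_edgeSet_of_mem_edges_sup_edge {u v : V} {p : (G ⊔ edge x y).Walk u v}
    (hp : s(x, y) ∉ p.edges) : ∀ e ∈ p.edges, e ∈ G.edgeSet := by
  intro e he
  have hmem := p.edges_subset_edgeSet he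
  rw [edgeSet_sup] at hmem
  refine hmem.resolve_right fun h ↦ hp ?_
  rwa [← Set.mem_singleton_iff.1 (edgeSet_edge_subset h)]

lemma IsCyclable.of_sup_edge [Fintype V] [DecidableRel G.Adj]
    (hdeg : Fintype.card V ≤ G.degree x + G.degree y) (h : IsCyclable (G ⊔ edge x y) S) :
    IsCyclable G S := by
  obtain ⟨v, c, hc, hS⟩ := h
  by_cases he : s(x, y) ∈ c.edges
  · obtain ⟨p, hp, hl, hep, hcp⟩ := exists_isPath_of_isCycle_of_mem_edges hc he
    have hpG := mem_edgeSet_of_mem_edges_sup_edge hep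
    refine (isCyclable_support_of_card_le_degree_add_degree (hp.transfer hpG)
      (by simpa using hl) hdeg).anti ?_
    exact fun s hs ↦ by simpa using hcp s (hS s hs)
  · have hcG := mem_edgeSet_of_mem_edges_sup_edge he
    exact ⟨v, c.transfer G hcG, hc.transfer hcG, by simpa using hS⟩

lemma exists_le_isClique_of_card_le_degree_add_degree [Fintype V] [DecidableRel G.Adj]
    (hdeg : ∀ x ∈ S, ∀ y ∈ S, x ≠ y → ¬ G.Adj x y → Fintype.card V ≤ G.degree x + G.degree y) :
    ∃ H, G ≤ H ∧ H.IsClique S ∧ ∀ T, IsCyclable H T → IsCyclable G T := by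
  classical
  obtain ⟨H, -, ⟨hGH, hcyc⟩, hmax⟩ :=
    (Set.toFinite {H | G ≤ H ∧ ∀ T, IsCyclable H T → IsCyclable G T}).exists_le_maximal
      ⟨le_rfl, fun _ ↦ id⟩
  refine ⟨H, hGH, fun x hx y hy hne ↦ ?_, hcyc⟩
  by_contra hxy
  have hdegH : Fintype.card V ≤ H.degree x + H.degree y :=
    (hdeg x hx y hy hne fun h ↦ hxy (hGH h)).trans
      (add_le_add (degree_le_of_le hGH) (degree_le_of_le hGH))
  exact (H.lt_sup_edge x y hne hxy).not_ge (hmax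
    ⟨hGH.trans le_sup_left, fun T hT ↦ hcyc T (.of_sup_edge hdegH hT)⟩ le_sup_left)

lemma isCyclable_of_isClique_of_three_le_ncard (hS : G.IsClique S) (h3 : 3 ≤ S.ncard) :
    IsCyclable G S := by
  lift S to Finset V using Set.finite_of_ncard_pos (by omega)
  rw [Set.ncard_coe_finset] at h3
  have hne : S.toList ≠ [] := by
    rw [← List.length_pos_iff, Finset.length_toList]
    omega
  have hpair : S.toList.Pairwise G.Adj := S.nodup_toList.imp_of_mem fun ha hb hab ↦
    hS (Finset.mem_toList.1 ha) (Finset.mem_toList.1 hb) hab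
  let p := Walk.ofSupport S.toList hne hpair.isChain
  have hp : p.IsPath := .mk' (by simpa [p] using S.nodup_toList)
  have hl : 2 ≤ p.length := by
    rw [Walk.length_ofSupport, Finset.length_toList]
    omega
  have hadj : G.Adj (S.toList.getLast hne) (S.toList.head hne) := by
    refine hS (Finset.mem_toList.1 (List.getLast_mem hne))
      (Finset.mem_toList.1 (List.head_mem hne)) fun h ↦ ?_
    have := (hp.getVert_eq_start_iff le_rfl).1 ((Walk.getVert_length _).trans h)
    omega
  exact (isCyclable_support_of_adj hp hl hadj).anti fun v hv ↦ by simpa [p] using hv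

lemma isCyclable_pair_of_isEdgeConnected_two (hG : G.IsEdgeConnected 2) (hxy : G.Adj x y) :
    IsCyclable G {x, y} := by
  obtain ⟨v, c, hc, he⟩ := adj_and_reachable_delete_edges_iff_exists_cycle.1
    ⟨hxy, isEdgeConnected_two.1 hG s(x, y) x y⟩
  refine ⟨v, c, hc, ?_⟩
  rintro s (rfl | rfl)
  exacts [c.fst_mem_support_of_mem_edges he, c.snd_mem_support_of_mem_edges he]

lemma isCyclable_of_isClique_of_isEdgeConnected_two [Nontrivial V] (hG : G.IsEdgeConnected 2)
    (hS : G.IsClique S) (h2 : S.encard ≤ 2) : IsCyclable G S := by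
  obtain ⟨x, y, hxy, hSxy⟩ : ∃ x y, G.Adj x y ∧ S ⊆ {x, y} := by
    obtain hsub | ⟨x, hx, y, hy, hne⟩ := S.subsingleton_or_nontrivial
    · obtain ⟨x, hx⟩ : ∃ x, S ⊆ {x} := by
        obtain rfl | ⟨x, rfl⟩ := hsub.eq_empty_or_singleton
        exacts [⟨Classical.arbitrary V, by simp⟩, ⟨x, subset_rfl⟩]
      obtain ⟨y, hxy⟩ := (hG.preconnected two_ne_zero).exists_adj_of_nontrivial x
      exact ⟨x, y, hxy, hx.trans (by simp)⟩
    · refine ⟨x, y, hS hx hy hne, ?_⟩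
      exact ((Set.toFinite {x, y}).eq_of_subset_of_encard_le (Set.pair_subset hx hy)
        (by rwa [Set.encard_pair hne])).ge
  exact (isCyclable_pair_of_isEdgeConnected_two hG hxy).anti hSxy

lemma reachable_deleteEdges_of_preconnected_induce_compl {w a b : V} {e : Sym2 V}
    (hw : (G.induce {w}ᶜ).Preconnected) (he : e ∈ G.edgeSet → w ∈ e) (ha : a ≠ w) (hb : b ≠ w) :
    (G.deleteEdges {e}).Reachable a b := by
  let f : G.induce {w}ᶜ →g G.deleteEdges {e} :=
    ⟨Subtype.val, fun {u v} huv ↦ deleteEdges_adj.2 ⟨huv, by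
      rintro rfl
      exact (Sym2.mem_iff.1 (he huv)).elim (fun h ↦ u.2 h.symm) fun h ↦ v.2 h.symm⟩⟩
  exact (hw ⟨a, ha⟩ ⟨b, hb⟩).map f

lemma isEdgeConnected_two_of_preconnected_induce_compl (h3 : 3 ≤ ENat.card V)
    (hconn : ∀ w : V, (G.induce {w}ᶜ).Preconnected) : G.IsEdgeConnected 2 := by
  refine isEdgeConnected_two.2 fun e a b ↦ ?_
  induction e with | _ x y => ?_
  obtain ⟨z, hzx, hzy⟩ := ENat.exists_ne_ne_of_three_le h3 x y
  have hz (a : V) : (G.deleteEdges {s(x, y)}).Reachable a z := by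
    by_cases hax : a = x
    · by_cases hay : a = y
      · -- The loop `s(a, a)` is not an edge, so any vertex other than `a` and `z` can be avoided.
        obtain ⟨w, hwa, hwz⟩ := ENat.exists_ne_ne_of_three_le h3 a z
        exact reachable_deleteEdges_of_preconnected_induce_compl (hconn w)
          (fun h ↦ absurd (hax.symm.trans hay) h.ne) hwa.symm hwz.symm
      · exact reachable_deleteEdges_of_preconnected_induce_compl (hconn y) (by simp) hay hzy
    · exact reachable_deleteEdges_of_preconnected_induce_compl (hconn x) (by simp) hax hzx
  exact (hz a).trans (hz b).symm

end Cyclable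

theorem shi_cyclable_of_degree_sums_general {W : Type*} [Fintype W] [Nontrivial W]
    (G : SimpleGraph W) [DecidableRel G.Adj] (S : Set W)
    (hconn : S.ncard ≤ 2 → G.IsEdgeConnected 2)
    (hdeg : ∀ x ∈ S, ∀ y ∈ S, x ≠ y → ¬ G.Adj x y →
      Fintype.card W ≤ G.degree x + G.degree y) :
    IsCyclable G S := by
  obtain ⟨H, hGH, hS, hcyc⟩ := exists_le_isClique_of_card_le_degree_add_degree hdeg
  refine hcyc S ?_
  obtain h2 | h3 := le_or_gt S.ncard 2
  · exact isCyclable_of_isClique_of_isEdgeConnected_two (fun u v ↦ (hconn h2 u v).mono hGH) hS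
      (Set.encard_le_coe_iff_finite_ncard_le.2 ⟨S.toFinite, h2⟩)
  · exact isCyclable_of_isClique_of_three_le_ncard hS h3

/-- Theorem B, Shi. -/
theorem shi_cyclable_of_degree_sums {W : Type*} [Fintype W]
    (G : SimpleGraph W) [DecidableRel G.Adj]
    (h2conn : 3 ≤ Fintype.card W ∧
      ∀ w : W, (G.induce ({w}ᶜ : Set W)).Connected)
    (S : Set W)
    (hdeg : ∀ x ∈ S, ∀ y ∈ S, x ≠ y → ¬ G.Adj x y →
      G.degree x + G.degree y ≥ Fintype.card W) :
    ∃ (v : W) (c : G.Walk v v), c.IsCycle ∧ ∀ s ∈ S, s ∈ c.support := by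
  have : Nontrivial W := Fintype.one_lt_card_iff_nontrivial.1 (by omega)
  exact shi_cyclable_of_degree_sums_general G S (fun _ ↦
    isEdgeConnected_two_of_preconnected_induce_compl (by simpa using h2conn.1)
      fun w ↦ (h2conn.2 w).preconnected) hdeg
end
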